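/- arXiv:2601.09987 — 2 statements merged into one kernel-verified Lean document; each statement's English description precedes it below -/
import Mathlib

section
/- Let (L,R) be a superbalanced pair of (0,1)-matrices with N+1 rows, having a common zero row (the purifier), and suppose (L,R) admits a contraction map. Then for every i ∈ {1,...,N+1}, the null reduction (L',R') of (L,R) on i admits a contraction map. -/
/-- A contraction map for a pair of (0,1)-matrices (rows indexed by `P`,
columns of `L` by `ι`, columns of `R` by `κ`): it sends the rows of `L` to the
corresponding rows of `R` and is 1-Lipschitz for the Hamming distance. -/
def IsContractionMap {P ι κ : Type} [Fintype ι] [DecidableEq ι] [Fintype κ] [DecidableEq κ]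
    (L : P → ι → Bool) (R : P → κ → Bool) (f : (ι → Bool) → κ → Bool) : Prop :=
  (∀ i, f (L i) = R i) ∧
  ∀ x x' : ι → Bool, hammingDist (f x) (f x') ≤ hammingDist x x'

/-!
For rows `0` (the purifier), `a` and `b` of `L`, superbalancedness says that a contraction map
preserves their pairwise Hamming distances. It therefore maps each of the three metric intervals
between them into the interval between the images, and hence maps the unique common point of these
intervals, the majority `a ⊓ b` of `0`, `a` and `b`, to the majority of the images. Since extending
the restriction of row `j` to the support of row `i` by zero gives the meet of the two rows,
extending by zero, contracting and restricting is a contraction map for the null reduction on `i`.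
-/

open scoped Finset

section HammingInterval

variable {ι : Type*} [Fintype ι] {β : ι → Type*} [∀ n, DecidableEq (β n)]

/-- The metric interval between `x` and `y` for the Hamming distance, that is, the set of points
lying on a geodesic from `x` to `y`. -/
def hammingInterval (x y : ∀ n, β n) : Set (∀ n, β n) :=
  {z | hammingDist x z + hammingDist z y = hammingDist x y}

theorem mem_hammingInterval_iff {x y z : ∀ n, β n} :
    z ∈ hammingInterval x y ↔ ∀ n, z n = x n ∨ z n = y n := by
  have pointwise_triangle (n : ι) : (if x n ≠ y n then 1 else 0) ≤
      (if x n ≠ z n then 1 else 0) + (if z n ≠ y n then 1 else 0) := by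
    grind
  simp only [hammingInterval, hammingDist, Set.mem_ofPred_eq, Finset.card_filter,
    ← Finset.sum_add_distrib]
  rw [eq_comm, Finset.sum_eq_sum_iff_of_le fun n _ => pointwise_triangle n]
  simp only [Finset.mem_univ, forall_const]
  exact forall_congr' fun n => by grind

theorem map_mem_hammingInterval {κ : Type*} [Fintype κ] {γ : κ → Type*} [∀ n, DecidableEq (γ n)]
    {f : (∀ n, β n) → ∀ n, γ n} (hf : ∀ x y, hammingDist (f x) (f y) ≤ hammingDist x y)
    {x y z : ∀ n, β n} (hxy : hammingDist x y = hammingDist (f x) (f y))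
    (hz : z ∈ hammingInterval x y) : f z ∈ hammingInterval (f x) (f y) := by
  refine le_antisymm ?_ (hammingDist_triangle _ _ _)
  calc hammingDist (f x) (f z) + hammingDist (f z) (f y)
      ≤ hammingDist x z + hammingDist z y := add_le_add (hf x z) (hf z y)
    _ = hammingDist x y := hz
    _ = hammingDist (f x) (f y) := hxy

end HammingInterval

section Majority

variable {ι κ : Type*}

/-- The coordinatewise majority of three Boolean vectors, which is their median for the Hamming
distance. -/
def majority (x y z : ι → Bool) : ι → Bool :=
  x ⊓ y ⊔ y ⊓ z ⊔ z ⊓ x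

theorem majority_bot_left (x y : ι → Bool) : majority ⊥ x y = x ⊓ y := by
  simp [majority]

variable [Fintype ι] [Fintype κ]

theorem hammingInterval_inter_eq_singleton_majority (x y z : ι → Bool) :
    hammingInterval x y ∩ hammingInterval y z ∩ hammingInterval z x = {majority x y z} := by
  ext w
  simp only [Set.mem_inter_iff, mem_hammingInterval_iff, Set.mem_singleton_iff, funext_iff,
    ← forall_and]
  refine forall_congr' fun n => ?_
  simp only [majority, Pi.sup_apply, Pi.inf_apply]
  generalize w n = d, x n = a, y n = b, z n = c
  decide +revert

theorem map_majority_of_hammingDist_eq {f : (ι → Bool) → κ → Bool}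
    (hf : ∀ x y, hammingDist (f x) (f y) ≤ hammingDist x y) {x y z : ι → Bool}
    (hxy : hammingDist x y = hammingDist (f x) (f y))
    (hyz : hammingDist y z = hammingDist (f y) (f z))
    (hzx : hammingDist z x = hammingDist (f z) (f x)) :
    f (majority x y z) = majority (f x) (f y) (f z) := by
  obtain ⟨⟨mem_xy, mem_yz⟩, mem_zx⟩ :=
    (hammingInterval_inter_eq_singleton_majority x y z).ge rfl
  exact (hammingInterval_inter_eq_singleton_majority (f x) (f y) (f z)).le
    ⟨⟨map_mem_hammingInterval hf hxy mem_xy, map_mem_hammingInterval hf hyz mem_yz⟩,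
      map_mem_hammingInterval hf hzx mem_zx⟩

end Majority

section Reindex

variable {ι ι' β : Type*} [Fintype ι] [Fintype ι'] [DecidableEq β]

theorem hammingDist_comp_le_of_injective {g : ι' → ι} (hg : g.Injective) (x y : ι → β) :
    hammingDist (x ∘ g) (y ∘ g) ≤ hammingDist x y :=
  Finset.card_le_card_of_injOn g (by simp [Set.MapsTo]) hg.injOn

theorem hammingDist_extend_le (g : ι' → ι) (x y : ι' → β) (e : ι → β) :
    hammingDist (g.extend x e) (g.extend y e) ≤ hammingDist x y := by
  classical
  refine Finset.card_le_card_of_surjOn g fun n hn => ?_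
  have hne : g.extend x e n ≠ g.extend y e n := by simpa using hn
  by_cases h : ∃ m, g m = n
  · rw [Function.extend_def, Function.extend_def, dif_pos h, dif_pos h] at hne
    exact ⟨h.choose, by simpa using hne, h.choose_spec⟩
  · simp only [Function.extend_apply' _ _ _ h, ne_eq, not_true_eq_false] at hne

end Reindex

theorem extend_comp_val_bot_eq_inf {ι : Type*} (a b : ι → Bool) :
    Function.extend Subtype.val (b ∘ (Subtype.val : {n // a n = true} → ι)) ⊥ = a ⊓ b := by
  funext n
  by_cases h : a n = true
  · lift n to {n // a n = true} using h
    simp [n.2]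
  · rw [Function.extend_apply' _ _ _ (by simpa using h)]
    simp [h]

theorem hammingDist_add_two_mul_card_and {ι : Type*} [Fintype ι] (a b : ι → Bool) :
    hammingDist a b + 2 * #{n | a n ∧ b n} = #{n | a n} + #{n | b n} := by
  simp only [hammingDist, Finset.card_filter, Finset.mul_sum, ← Finset.sum_add_distrib]
  refine Finset.sum_congr rfl fun n _ => ?_
  generalize a n = s, b n = t
  decide +revert

section Superbalanced

variable {P ι κ : Type*} [Fintype ι] [Fintype κ]

/-- A pair of (0,1)-matrices with the same row index type is superbalanced if the dot product of
any two rows of `L`, encoded as the number of their common `true` entries, equals that of the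
corresponding rows of `R`. -/
def IsSuperbalanced (L : P → ι → Bool) (R : P → κ → Bool) : Prop :=
  ∀ i j, #{n | L i n ∧ L j n} = #{n | R i n ∧ R j n}

theorem IsSuperbalanced.hammingDist_eq {L : P → ι → Bool} {R : P → κ → Bool}
    (h : IsSuperbalanced L R) (i j : P) :
    hammingDist (L i) (L j) = hammingDist (R i) (R j) := by
  have card_row (k : P) : #{n | L k n} = #{n | R k n} := by
    simpa only [and_self] using h k k
  have hL := hammingDist_add_two_mul_card_and (L i) (L j)
  have hR := hammingDist_add_two_mul_card_and (R i) (R j)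
  rw [h i j, card_row i, card_row j] at hL
  omega

end Superbalanced

section ContractionMap

variable {P ι κ : Type} [Fintype ι] [DecidableEq ι] [Fintype κ] [DecidableEq κ]
  {L : P → ι → Bool} {R : P → κ → Bool} {f : (ι → Bool) → κ → Bool}

theorem IsContractionMap.map_majority_rows (hf : IsContractionMap L R f)
    (hsuper : IsSuperbalanced L R) (i j k : P) :
    f (majority (L i) (L j) (L k)) = majority (R i) (R j) (R k) := by
  have dist_eq (i j : P) : hammingDist (L i) (L j) = hammingDist (f (L i)) (f (L j)) := by
    rw [hf.1, hf.1, hsuper.hammingDist_eq]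
  simpa only [hf.1] using
    map_majority_of_hammingDist_eq hf.2 (dist_eq i j) (dist_eq j k) (dist_eq k i)

theorem IsContractionMap.map_inf_rows (hf : IsContractionMap L R f)
    (hsuper : IsSuperbalanced L R) {p : P} (hpL : L p = ⊥) (hpR : R p = ⊥) (i j : P) :
    f (L i ⊓ L j) = R i ⊓ R j := by
  simpa only [hpL, hpR, majority_bot_left] using hf.map_majority_rows hsuper p i j

theorem stmt_1_general (hsuper : IsSuperbalanced L R) (hpurifier : ∃ p, L p = ⊥ ∧ R p = ⊥)
    (hcontr : ∃ f, IsContractionMap L R f) (i : P) :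
    ∃ f' : ({n // L i n = true} → Bool) → {n // R i n = true} → Bool,
      IsContractionMap (fun j => L j ∘ Subtype.val) (fun j => R j ∘ Subtype.val) f' := by
  obtain ⟨p, hpL, hpR⟩ := hpurifier
  obtain ⟨f, hf⟩ := hcontr
  refine ⟨fun x => f (Function.extend Subtype.val x ⊥) ∘ Subtype.val, fun j => ?_, fun x x' => ?_⟩
  · beta_reduce
    rw [extend_comp_val_bot_eq_inf, hf.map_inf_rows hsuper hpL hpR]
    funext ⟨n, hn⟩
    simp [hn]
  · let extendByZero (y : {n // L i n = true} → Bool) : ι → Bool :=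
      Function.extend Subtype.val y ⊥
    calc hammingDist (f (extendByZero x) ∘ Subtype.val) (f (extendByZero x') ∘ Subtype.val)
        ≤ hammingDist (f (extendByZero x)) (f (extendByZero x')) :=
          hammingDist_comp_le_of_injective Subtype.val_injective _ _
      _ ≤ hammingDist (extendByZero x) (extendByZero x') := hf.2 _ _
      _ ≤ hammingDist x x' := hammingDist_extend_le _ x x' ⊥

end ContractionMap

/-- if a superbalanced pair with a purifier admits a contraction map,
then each of its null reductions admits a contraction map. -/
theorem stmt_1 {N mL mR : ℕ}
    (L : Fin (N + 1) → Fin mL → Bool) (R : Fin (N + 1) → Fin mR → Bool)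
    (hsuper : ∀ i j : Fin (N + 1),
      (Finset.univ.filter fun n => L i n = true ∧ L j n = true).card =
      (Finset.univ.filter fun n => R i n = true ∧ R j n = true).card)
    (hpurifier : ∃ p : Fin (N + 1), (∀ n, L p n = false) ∧ (∀ n, R p n = false))
    (hcontr : ∃ f : (Fin mL → Bool) → Fin mR → Bool, IsContractionMap L R f)
    (i : Fin (N + 1)) :
    ∃ f' : ({n : Fin mL // L i n = true} → Bool) → ({n : Fin mR // R i n = true} → Bool),
      IsContractionMap (fun j (n : {n : Fin mL // L i n = true}) => L j n.1)
        (fun j (n : {n : Fin mR // R i n = true}) => R j n.1) f' :=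
  stmt_1_general hsuper (hpurifier.imp fun _ ⟨hL, hR⟩ => ⟨funext hL, funext hR⟩) hcontr i
end

section
/- Let A be the 6×3 (0,1)-matrix with rows (1,1,0),(1,1,0),(1,0,1),(1,0,1),(0,1,1),(0,1,1), and let B be the 6×8 (0,1)-matrix with rows (1,1,1,0,0,1,0,0),(1,0,0,1,1,1,0,0),(1,1,0,1,0,0,1,0),(1,0,1,0,1,0,1,0),(1,1,0,0,1,0,0,1),(1,0,1,1,0,0,0,1). Let L be the 8×15 matrix whose first 6 rows are [A | I₆ | I₆] (I₆ the 6×6 identity), whose 7th row is all 1s and whose 8th row is all 0s; let R be the 8×15 matrix whose first 6 rows are [B | O] (O the 6×7 zero matrix), whose 7th row is all 1s and whose 8th row is all 0s. Then L is positive-combinations majorized by R: for every row vector v ∈ ℝ^8 with nonnegative entries, vL is majorized by vR. -/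
/-- `x` is majorized by `y`: for every `k`, the sum of the `k` largest entries of `x`
is at most the sum of the `k` largest entries of `y` (expressed as: every `k`-element
partial sum of `x` is dominated by some `k`-element partial sum of `y`), and the total
sums agree. -/
def MajorizedBy {d : ℕ} (x y : Fin d → ℝ) : Prop :=
  (∀ s : Finset (Fin d), ∃ t : Finset (Fin d), t.card = s.card ∧
    ∑ i ∈ s, x i ≤ ∑ i ∈ t, y i) ∧
  ∑ i, x i = ∑ i, y i

def L12 : Fin 8 → Fin 15 → ℝ :=
  ![![1, 1, 0, 1, 0, 0, 0, 0, 0, 1, 0, 0, 0, 0, 0],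
     ![1, 1, 0, 0, 1, 0, 0, 0, 0, 0, 1, 0, 0, 0, 0],
     ![1, 0, 1, 0, 0, 1, 0, 0, 0, 0, 0, 1, 0, 0, 0],
     ![1, 0, 1, 0, 0, 0, 1, 0, 0, 0, 0, 0, 1, 0, 0],
     ![0, 1, 1, 0, 0, 0, 0, 1, 0, 0, 0, 0, 0, 1, 0],
     ![0, 1, 1, 0, 0, 0, 0, 0, 1, 0, 0, 0, 0, 0, 1],
     ![1, 1, 1, 1, 1, 1, 1, 1, 1, 1, 1, 1, 1, 1, 1],
     ![0, 0, 0, 0, 0, 0, 0, 0, 0, 0, 0, 0, 0, 0, 0]]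

def R12 : Fin 8 → Fin 15 → ℝ :=
  ![![1, 1, 1, 0, 0, 1, 0, 0, 0, 0, 0, 0, 0, 0, 0],
     ![1, 0, 0, 1, 1, 1, 0, 0, 0, 0, 0, 0, 0, 0, 0],
     ![1, 1, 0, 1, 0, 0, 1, 0, 0, 0, 0, 0, 0, 0, 0],
     ![1, 0, 1, 0, 1, 0, 1, 0, 0, 0, 0, 0, 0, 0, 0],
     ![1, 1, 0, 0, 1, 0, 0, 1, 0, 0, 0, 0, 0, 0, 0],
     ![1, 0, 1, 1, 0, 0, 0, 1, 0, 0, 0, 0, 0, 0, 0],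
     ![1, 1, 1, 1, 1, 1, 1, 1, 1, 1, 1, 1, 1, 1, 1],
     ![0, 0, 0, 0, 0, 0, 0, 0, 0, 0, 0, 0, 0, 0, 0]]

/-!
Column sets of equal size are compared row by row: if the row sums of a set `s` of columns of `L`
are at most the average of those of some sets of `#s` columns of `R`, then for each nonnegative `v`
one of these sets carries at least as much of `vR` as `s` carries of `vL`. A single set is enough
for every `s` except `{0, 1, 2}`, the columns of `A`, where `{0, 1, 2}` and `{0, 3, 4}` are
averaged. For the other `s`, first dominate the columns of `A` in `s` (together with one unit
column, if `s` strictly contains `{0, 1, 2}`), then add the remaining unit columns one at a time.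
Each raises the demand in a single one of the first six rows. This is met by a new column of `R`
having a one in that row; if there is none left, then the chosen columns already exhaust the row
sum of `R`, which equals that of `L`.
-/

open Finset

section ColumnSets

variable {ι κ α : Type*} [AddCommMonoid α] [PartialOrder α]

/-- The column set `t` of `R` dominates the column set `s` of `L`: the two sets have the same size
and each row of `R` sums over `t` to at least what the same row of `L` sums to over `s`. -/
def ColumnsDominated (L R : ι → κ → α) (s t : Finset κ) : Prop :=
  #t = #s ∧ ∀ i, ∑ n ∈ s, L i n ≤ ∑ n ∈ t, R i n

/-- Column `n` of `L` is entrywise at most every column of `R`, except in one row `i`, where the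
nonzero entries of `R` are still at least `L i n`. The unit columns of the matrix `[A | I | I]`,
bordered by a row of ones and a row of zeros, have this property. -/
def DominatedOffOneRow (L R : ι → κ → α) (n : κ) : Prop :=
  ∃ i, (∀ m, R i m = 0 ∨ L i n ≤ R i m) ∧ ∀ j ≠ i, ∀ m, L j n ≤ R j m

variable [Fintype κ] [DecidableEq κ] [IsOrderedAddMonoid α] {L R : ι → κ → α} {s t : Finset κ}

lemma ColumnsDominated.exists_insert (hL : ∀ i n, 0 ≤ L i n)
    (hsum : ∀ i, ∑ n, L i n ≤ ∑ n, R i n) {n : κ} (hns : n ∉ s) (hn : DominatedOffOneRow L R n)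
    (h : ColumnsDominated L R s t) : ∃ m, ColumnsDominated L R (insert n s) (insert m t) := by
  obtain ⟨hcard, hle⟩ := h
  obtain ⟨i, hi, hoff⟩ := hn
  have insert_le {j : ι} {m : κ} (hm : m ∉ t) (hjm : L j n ≤ R j m) :
      ∑ a ∈ insert n s, L j a ≤ ∑ a ∈ insert m t, R j a := by
    simpa only [sum_insert hns, sum_insert hm] using add_le_add hjm (hle j)
  have card_eq {m : κ} (hm : m ∉ t) : #(insert m t) = #(insert n s) := by
    rw [card_insert_of_notMem hm, card_insert_of_notMem hns, hcard]
  by_cases hnew : ∃ m ∉ t, L i n ≤ R i m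
  · obtain ⟨m, hm, him⟩ := hnew
    refine ⟨m, card_eq hm, fun j => insert_le hm ?_⟩
    obtain rfl | hji := eq_or_ne j i
    exacts [him, hoff j hji m]
  · push Not at hnew
    obtain ⟨m, hm⟩ : ∃ m, m ∉ t := by
      have hlt : #t < Fintype.card κ := hcard ▸ card_lt_univ_of_notMem hns
      simpa only [mem_univ, true_and] using exists_mem_notMem_of_card_lt_card (t := univ) hlt
    refine ⟨m, card_eq hm, fun j => ?_⟩
    obtain rfl | hji := eq_or_ne j i
    · calc ∑ a ∈ insert n s, L j a ≤ ∑ a, L j a :=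
            sum_le_sum_of_subset_of_nonneg (subset_univ _) fun a _ _ => hL j a
        _ ≤ ∑ a, R j a := hsum j
        _ = ∑ a ∈ insert m t, R j a := Eq.symm <| sum_subset (subset_univ _) fun a _ ha =>
            (hi a).resolve_right (hnew a fun hat => ha (mem_insert_of_mem hat))
    · exact insert_le hm (hoff j hji m)

lemma ColumnsDominated.exists_of_subset (hL : ∀ i n, 0 ≤ L i n)
    (hsum : ∀ i, ∑ n, L i n ≤ ∑ n, R i n) {s' : Finset κ} (hss' : s ⊆ s')
    (hn : ∀ n ∈ s' \ s, DominatedOffOneRow L R n) (h : ColumnsDominated L R s t) :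
    ∃ t', ColumnsDominated L R s' t' := by
  suffices ∀ u ⊆ s' \ s, ∃ t', ColumnsDominated L R (u ∪ s) t' by
    simpa only [sdiff_union_of_subset hss'] using this _ Subset.rfl
  intro u hu
  induction u using Finset.induction_on with
  | empty => exact ⟨t, by simpa only [empty_union] using h⟩
  | insert n u hnu ih =>
    obtain ⟨hmem, hu⟩ := insert_subset_iff.1 hu
    obtain ⟨t', ht'⟩ := ih hu
    have hnus : n ∉ u ∪ s := notMem_union.2 ⟨hnu, (mem_sdiff.1 hmem).2⟩
    obtain ⟨m, hm⟩ := ht'.exists_insert hL hsum hnus (hn n hmem)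
    exact ⟨insert m t', by rwa [insert_union]⟩

end ColumnSets

lemma exists_sum_le_of_card_nsmul_le_sum {ι κ α : Type*} [Fintype ι] [Semiring α] [LinearOrder α]
    [IsStrictOrderedRing α] {L R : ι → κ → α} {s : Finset κ} {F : Finset (Finset κ)}
    (hF : F.Nonempty) (h : ∀ i, #F • ∑ n ∈ s, L i n ≤ ∑ t ∈ F, ∑ n ∈ t, R i n) {v : ι → α}
    (hv : ∀ i, 0 ≤ v i) :
    ∃ t ∈ F, ∑ n ∈ s, ∑ i, v i * L i n ≤ ∑ n ∈ t, ∑ i, v i * R i n := by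
  refine exists_le_of_sum_le hF ?_
  calc ∑ _t ∈ F, ∑ n ∈ s, ∑ i, v i * L i n = ∑ i, v i * (#F • ∑ n ∈ s, L i n) := by
        rw [sum_const, sum_comm, smul_sum]
        simp only [← mul_sum, mul_smul_comm]
    _ ≤ ∑ i, v i * ∑ t ∈ F, ∑ n ∈ t, R i n :=
        sum_le_sum fun i _ => mul_le_mul_of_nonneg_left (h i) (hv i)
    _ = ∑ t ∈ F, ∑ n ∈ t, ∑ i, v i * R i n := by
        simp only [mul_sum]
        rw [sum_comm]
        exact sum_congr rfl fun t _ => sum_comm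

theorem majorizedBy_of_card_nsmul_le_sum {ι : Type*} [Fintype ι] {d : ℕ} {L R : ι → Fin d → ℝ}
    (hsum : ∀ i, ∑ n, L i n = ∑ n, R i n)
    (h : ∀ s : Finset (Fin d), ∃ F : Finset (Finset (Fin d)), F.Nonempty ∧ (∀ t ∈ F, #t = #s) ∧
      ∀ i, #F • ∑ n ∈ s, L i n ≤ ∑ t ∈ F, ∑ n ∈ t, R i n)
    {v : ι → ℝ} (hv : ∀ i, 0 ≤ v i) :
    MajorizedBy (fun n => ∑ i, v i * L i n) (fun n => ∑ i, v i * R i n) := by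
  refine ⟨fun s => ?_, ?_⟩
  · obtain ⟨F, hF, hcard, hle⟩ := h s
    obtain ⟨t, htF, ht⟩ := exists_sum_le_of_card_nsmul_le_sum hF hle hv
    exact ⟨t, hcard t htF, ht⟩
  · rw [sum_comm, sum_comm (f := fun n i => v i * R i n)]
    simp only [← mul_sum, hsum]

lemma L12_eq_zero_or_one (i : Fin 8) (n : Fin 15) : L12 i n = 0 ∨ L12 i n = 1 := by
  fin_cases i <;> fin_cases n <;> simp [L12]

lemma R12_eq_zero_or_one (i : Fin 8) (n : Fin 15) : R12 i n = 0 ∨ R12 i n = 1 := by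
  fin_cases i <;> fin_cases n <;> simp [R12]

lemma R12_six (m : Fin 15) : R12 6 m = 1 := by
  fin_cases m <;> rfl

lemma L12_nonneg (i : Fin 8) (n : Fin 15) : 0 ≤ L12 i n := by
  obtain h | h := L12_eq_zero_or_one i n <;> simp [h]

lemma L12_le_one (i : Fin 8) (n : Fin 15) : L12 i n ≤ 1 := by
  obtain h | h := L12_eq_zero_or_one i n <;> simp [h]

lemma R12_nonneg (i : Fin 8) (n : Fin 15) : 0 ≤ R12 i n := by
  obtain h | h := R12_eq_zero_or_one i n <;> simp [h]

lemma sum_L12_eq_sum_R12 (i : Fin 8) : ∑ n, L12 i n = ∑ n, R12 i n := by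
  fin_cases i <;> simp [Fin.sum_univ_succ, L12, R12]

lemma L12_eq_zero_of_three_le {n : Fin 15} (hn : 3 ≤ n) :
    ∃ i, ∀ j ≠ i, j ≠ 6 → L12 j n = 0 := by
  refine ⟨![0, 0, 0, 0, 1, 2, 3, 4, 5, 0, 1, 2, 3, 4, 5] n, fun j hji hj6 => ?_⟩
  fin_cases n <;> fin_cases j <;> simp [L12] at hn hji hj6 ⊢

lemma dominatedOffOneRow_of_three_le {n : Fin 15} (hn : 3 ≤ n) :
    DominatedOffOneRow L12 R12 n := by
  obtain ⟨i, hi⟩ := L12_eq_zero_of_three_le hn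
  refine ⟨i, fun m => (R12_eq_zero_or_one i m).imp_right fun h => ?_, fun j hji m => ?_⟩
  · exact (L12_le_one i n).trans_eq h.symm
  · obtain rfl | hj := eq_or_ne j 6
    · exact (L12_le_one 6 n).trans_eq (R12_six m).symm
    · exact (hi j hji hj).trans_le (R12_nonneg j m)

lemma exists_columnsDominated_of_ssubset {s : Finset (Fin 15)} (hs : s ⊂ {0, 1, 2}) :
    ∃ t, ColumnsDominated L12 R12 s t := by
  have hcases : s = ∅ ∨ s = {0} ∨ s = {1} ∨ s = {2} ∨ s = {0, 1} ∨ s = {0, 2} ∨ s = {1, 2} := by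
    have hmem := mem_powerset.2 hs.subset
    simp only [powerset_insert, mem_union, mem_image, mem_powerset, subset_singleton_iff] at hmem
    obtain ((rfl | rfl) | ⟨_, rfl | rfl, rfl⟩) | ⟨_, (rfl | rfl) | ⟨_, rfl | rfl, rfl⟩, rfl⟩ := hmem
    all_goals simp at hs ⊢
  obtain rfl | rfl | rfl | rfl | rfl | rfl | rfl := hcases
  · exact ⟨∅, rfl, fun _ => by simp⟩
  · exact ⟨{0}, rfl, fun i => by fin_cases i <;> simp [L12, R12]⟩
  · exact ⟨{0}, rfl, fun i => by fin_cases i <;> simp [L12, R12]⟩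
  · exact ⟨{0}, rfl, fun i => by fin_cases i <;> simp [L12, R12]⟩
  · exact ⟨{0, 5}, rfl, fun i => by fin_cases i <;> simp [L12, R12]⟩
  · exact ⟨{0, 6}, rfl, fun i => by fin_cases i <;> simp [L12, R12]⟩
  · exact ⟨{0, 7}, rfl, fun i => by fin_cases i <;> simp [L12, R12]⟩

lemma exists_columnsDominated_insert {n : Fin 15} (hn : 3 ≤ n) :
    ∃ t, ColumnsDominated L12 R12 (insert n {0, 1, 2}) t := by
  -- Columns `0, …, 4` of `R12` sum to 3 in each of the first six rows. Omitting one of the columns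
  -- `1, …, 4` that vanishes in the row of the unit column `n` leaves 3 there and at least 2 in the
  -- other five rows.
  have hcases : n ∈ ({3, 5, 8, 9, 11, 14} : Finset (Fin 15)) ∨
      n ∈ ({6, 7, 12, 13} : Finset (Fin 15)) ∨ n ∈ ({4, 10} : Finset (Fin 15)) := by
    decide +revert
  obtain h | h | h := hcases
  · refine ⟨{0, 1, 2, 3}, by decide +revert, fun i => ?_⟩
    fin_cases h <;> fin_cases i <;> simp [L12, R12]
  · refine ⟨{0, 1, 2, 4}, by decide +revert, fun i => ?_⟩
    fin_cases h <;> fin_cases i <;> simp [L12, R12]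
  · refine ⟨{0, 1, 3, 4}, by decide +revert, fun i => ?_⟩
    fin_cases h <;> fin_cases i <;> simp [L12, R12]

lemma three_le_of_notMem {n : Fin 15} (hn : n ∉ ({0, 1, 2} : Finset (Fin 15))) : 3 ≤ n := by
  decide +revert

lemma exists_columnsDominated {s : Finset (Fin 15)} (hs : s ≠ {0, 1, 2}) :
    ∃ t, ColumnsDominated L12 R12 s t := by
  suffices ∃ s₀ ⊆ s, s ∩ {0, 1, 2} ⊆ s₀ ∧ ∃ t, ColumnsDominated L12 R12 s₀ t by
    obtain ⟨s₀, hs₀, hinter, t, ht⟩ := this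
    refine ht.exists_of_subset L12_nonneg (fun i => (sum_L12_eq_sum_R12 i).le) hs₀ fun n hn => ?_
    obtain ⟨hns, hns₀⟩ := mem_sdiff.1 hn
    exact dominatedOffOneRow_of_three_le <| three_le_of_notMem fun h =>
      hns₀ (hinter (mem_inter.2 ⟨hns, h⟩))
  by_cases hA : {0, 1, 2} ⊆ s
  · obtain ⟨n, hns, hn⟩ := exists_of_ssubset (hA.ssubset_of_ne hs.symm)
    exact ⟨insert n {0, 1, 2}, insert_subset hns hA, inter_subset_right.trans (subset_insert _ _),
      exists_columnsDominated_insert (three_le_of_notMem hn)⟩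
  · have hss : s ∩ {0, 1, 2} ⊂ {0, 1, 2} :=
      inter_subset_right.ssubset_of_ne fun h => hA (inter_eq_right.1 h)
    exact ⟨_, inter_subset_left, Subset.rfl, exists_columnsDominated_of_ssubset hss⟩

lemma two_nsmul_sum_L12_le (i : Fin 8) :
    2 • ∑ n ∈ {0, 1, 2}, L12 i n ≤ ∑ n ∈ {0, 1, 2}, R12 i n + ∑ n ∈ {0, 3, 4}, R12 i n := by
  fin_cases i <;> simp [L12, R12] <;> norm_num

/-- `L12` is positive-combinations majorized by `R12`. -/
theorem stmt_12 :
    ∀ v : Fin 8 → ℝ, (∀ i, 0 ≤ v i) →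
      MajorizedBy (fun n => ∑ i, v i * L12 i n) (fun n => ∑ i, v i * R12 i n) := by
  intro v hv
  refine majorizedBy_of_card_nsmul_le_sum sum_L12_eq_sum_R12 (fun s => ?_) hv
  obtain rfl | hs := eq_or_ne s {0, 1, 2}
  · refine ⟨{{0, 1, 2}, {0, 3, 4}}, insert_nonempty _ _, by simp, fun i => ?_⟩
    have hne : ({0, 1, 2} : Finset (Fin 15)) ≠ {0, 3, 4} := by decide
    simpa only [sum_pair hne, card_pair hne] using two_nsmul_sum_L12_le i
  · obtain ⟨t, hcard, hle⟩ := exists_columnsDominated hs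
    exact ⟨{t}, singleton_nonempty t, by simpa using hcard, by simpa using hle⟩
end
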